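/- The set of good matrices is dense in the set of all joint probability matrices: for every m×n joint probability matrix A and every δ > 0 there exists a good m×n joint probability matrix B such that |a_ij − b_ij| < δ for all i, j. -/

import Mathlib

open scoped BigOperators Classical

noncomputable section

/-- Probability of an event `E` under a distribution `μ` on a finite sample space `Ω`. -/
def pr {Ω : Type} [Fintype Ω] (μ : Ω → ℝ) (E : Ω → Prop) : ℝ :=
  ∑ ω, if E ω then μ ω else 0

/-- `μ` is a probability distribution on the finite space `Ω`. -/
def IsProb {Ω : Type} [Fintype Ω] (μ : Ω → ℝ) : Prop :=
  (∀ ω, 0 ≤ μ ω) ∧ ∑ ω, μ ω = 1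

/-- Shannon entropy (base 2) of a random variable `α` on a finite probability space. -/
def ent {Ω A : Type} [Fintype Ω] (μ : Ω → ℝ) (α : Ω → A) : ℝ :=
  -∑ a ∈ Finset.univ.image α,
      pr μ (fun ω => α ω = a) * Real.logb 2 (pr μ (fun ω => α ω = a))

/-- Conditional entropy `H(α | β)`. -/
def condEnt {Ω A B : Type} [Fintype Ω] (μ : Ω → ℝ) (α : Ω → A) (β : Ω → B) : ℝ :=
  ent μ (fun ω => (α ω, β ω)) - ent μ β

/-- Mutual information `I(α : β)`. -/
def mutualInfo {Ω A B : Type} [Fintype Ω] (μ : Ω → ℝ) (α : Ω → A) (β : Ω → B) : ℝ :=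
  ent μ α + ent μ β - ent μ (fun ω => (α ω, β ω))

/-- Conditional mutual information `I(α : β | γ)`. -/
def condMutualInfo {Ω A B C : Type} [Fintype Ω] (μ : Ω → ℝ)
    (α : Ω → A) (β : Ω → B) (γ : Ω → C) : ℝ :=
  condEnt μ α γ + condEnt μ β γ - condEnt μ (fun ω => (α ω, β ω)) γ

/-- Independence of two random variables. -/
def Indep {Ω A B : Type} [Fintype Ω] (μ : Ω → ℝ) (α : Ω → A) (β : Ω → B) : Prop :=
  ∀ (a : A) (b : B),
    pr μ (fun ω => α ω = a ∧ β ω = b) =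
      pr μ (fun ω => α ω = a) * pr μ (fun ω => β ω = b)

/-- Auxiliary form of "conditionally independent of order `k`" (explicit `Fintype`):
`α` and `β` are conditionally independent of order `0` if they are independent,
and of order `k + 1` if on some finite probability space there are random variables
`α₀, β₀, α*, β*` such that `(α₀, β₀)` has the same joint distribution as `(α, β)`,
`I(α₀ : β₀ | α*) = 0`, `I(α₀ : β₀ | β*) = 0`, and `α*, β*` are conditionally
independent of order `k`. -/
def CondIndepOrderAux : ℕ → (Ω A B : Type) → Fintype Ω → (Ω → ℝ) → (Ω → A) → (Ω → B) → Prop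
  | 0, _Ω, _A, _B, iΩ, μ, α, β => @Indep _ _ _ iΩ μ α β
  | k+1, _Ω, A, B, iΩ, μ, α, β =>
      ∃ (Ω' A' B' : Type) (iΩ' : Fintype Ω') (μ' : Ω' → ℝ)
        (α₀ : Ω' → A) (β₀ : Ω' → B) (αs : Ω' → A') (βs : Ω' → B'),
        @IsProb _ iΩ' μ' ∧
        (∀ (a : A) (b : B),
          @pr _ iΩ' μ' (fun ω => α₀ ω = a ∧ β₀ ω = b) =
            @pr _ iΩ μ (fun ω => α ω = a ∧ β ω = b)) ∧
        @condMutualInfo _ _ _ _ iΩ' μ' α₀ β₀ αs = 0 ∧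
        @condMutualInfo _ _ _ _ iΩ' μ' α₀ β₀ βs = 0 ∧
        CondIndepOrderAux k Ω' A' B' iΩ' μ' αs βs

/-- Random variables `α` and `β` on a finite probability space are
conditionally independent of order `k`. -/
def CondIndepOrder {Ω A B : Type} [iΩ : Fintype Ω]
    (μ : Ω → ℝ) (α : Ω → A) (β : Ω → B) (k : ℕ) : Prop :=
  CondIndepOrderAux k Ω A B iΩ μ α β

/-- An `m × n` joint probability matrix: nonnegative entries summing to `1`. -/
def IsJointProbMatrix {m n : ℕ} (M : Matrix (Fin m) (Fin n) ℝ) : Prop :=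
  (∀ i j, 0 ≤ M i j) ∧ ∑ i, ∑ j, M i j = 1

/-- `M` is the joint probability matrix of the pair `(α, β)`. -/
def IsJointMatrixOf {Ω : Type} [Fintype Ω] {m n : ℕ} (M : Matrix (Fin m) (Fin n) ℝ)
    (μ : Ω → ℝ) (α : Ω → Fin m) (β : Ω → Fin n) : Prop :=
  ∀ i j, M i j = pr μ (fun ω => α ω = i ∧ β ω = j)

/-- `M` is a block matrix: rows and columns can be partitioned into two nonempty
parts so that the two diagonal blocks each contain a nonzero element and all
entries outside the diagonal blocks vanish. -/
def IsBlockMatrix {m n : ℕ} (M : Matrix (Fin m) (Fin n) ℝ) : Prop :=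
  ∃ (I₁ : Finset (Fin m)) (J₁ : Finset (Fin n)),
    I₁.Nonempty ∧ I₁ᶜ.Nonempty ∧ J₁.Nonempty ∧ J₁ᶜ.Nonempty ∧
    (∃ i ∈ I₁, ∃ j ∈ J₁, M i j ≠ 0) ∧
    (∃ i ∈ I₁ᶜ, ∃ j ∈ J₁ᶜ, M i j ≠ 0) ∧
    (∀ i j, ((i ∈ I₁ ∧ j ∈ J₁ᶜ) ∨ (i ∈ I₁ᶜ ∧ j ∈ J₁)) → M i j = 0)

/-- `M` is a good matrix: the joint probability matrix of some pair of
conditionally independent random variables (of some finite order). -/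
def IsGoodMatrix {m n : ℕ} (M : Matrix (Fin m) (Fin n) ℝ) : Prop :=
  ∃ (Ω : Type) (iΩ : Fintype Ω) (μ : Ω → ℝ) (α : Ω → Fin m) (β : Ω → Fin n) (k : ℕ),
    @IsProb _ iΩ μ ∧ @IsJointMatrixOf _ iΩ _ _ M μ α β ∧
    @CondIndepOrder _ _ _ iΩ μ α β k

/-- A stochastic matrix: nonnegative entries, all row sums equal to `1`. -/
def IsStochastic {m n : ℕ} (A : Matrix (Fin m) (Fin n) ℝ) : Prop :=
  (∀ i j, 0 ≤ A i j) ∧ ∀ i, ∑ j, A i j = 1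

/-- The matrix `D_ε`: diagonal entries `1/2 - ε`, off-diagonal entries `ε`. -/
def Dmat (ε : ℝ) : Matrix (Fin 2) (Fin 2) ℝ :=
  fun i j => if i = j then 1/2 - ε else ε

/-- The distribution of `n` i.i.d. trials, each distributed according to `μ`. -/
def iidMeasure {Ω : Type} [Fintype Ω] (μ : Ω → ℝ) (n : ℕ) : (Fin n → Ω) → ℝ :=
  fun ωv => ∏ i, μ (ωv i)

/-- The sequence of `n` coordinatewise copies of a random variable. -/
def iidRV {Ω A : Type} (α : Ω → A) (n : ℕ) : (Fin n → Ω) → (Fin n → A) :=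
  fun ωv i => α (ωv i)

/-- `(u, v, w)` belongs to the rate region of the pair `(α, β)`. -/
def InRateRegion {Ω A B : Type} [Fintype Ω] (μ : Ω → ℝ) (α : Ω → A) (β : Ω → B)
    (u v w : ℝ) : Prop :=
  0 ≤ u ∧ 0 ≤ v ∧ 0 ≤ w ∧
  ∀ ε > (0:ℝ), ∀ δ > (0:ℝ), ∃ n₀ : ℕ, ∀ n ≥ n₀,
    ∃ (t : (Fin n → A) × (Fin n → B) → (Fin ⌊(u + δ) * n⌋₊ → Bool))
      (f : (Fin n → A) × (Fin n → B) → (Fin ⌊(v + δ) * n⌋₊ → Bool))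
      (g : (Fin n → A) × (Fin n → B) → (Fin ⌊(w + δ) * n⌋₊ → Bool))
      (r : (Fin ⌊(u + δ) * n⌋₊ → Bool) × (Fin ⌊(v + δ) * n⌋₊ → Bool) → (Fin n → A))
      (s : (Fin ⌊(u + δ) * n⌋₊ → Bool) × (Fin ⌊(w + δ) * n⌋₊ → Bool) → (Fin n → B)),
      pr (iidMeasure μ n) (fun ωv =>
          r (t (iidRV α n ωv, iidRV β n ωv), f (iidRV α n ωv, iidRV β n ωv)) = iidRV α n ωv)
        > 1 - ε ∧
      pr (iidMeasure μ n) (fun ωv =>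
          s (t (iidRV α n ωv, iidRV β n ωv), g (iidRV α n ωv, iidRV β n ωv)) = iidRV β n ωv)
        > 1 - ε

/-- The support of a matrix: the set of positions of its nonzero entries. -/
def msupport {m n : ℕ} (M : Matrix (Fin m) (Fin n) ℝ) : Set (Fin m × Fin n) :=
  {p | M p.1 p.2 ≠ 0}

/-- An r-matrix: nonnegative entries and rectangular support. -/
def IsRMatrix {m n : ℕ} (M : Matrix (Fin m) (Fin n) ℝ) : Prop :=
  (∀ i j, 0 ≤ M i j) ∧ ∃ (A : Set (Fin m)) (B : Set (Fin n)), msupport M = A ×ˢ B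

/-- An r-decomposition of `M`: an expression of `M` as a finite sum of r-matrices
such that the supports of consecutive summands intersect. -/
def IsRDecomposition {m n : ℕ} (M : Matrix (Fin m) (Fin n) ℝ)
    (l : ℕ) (Ms : Fin l → Matrix (Fin m) (Fin n) ℝ) : Prop :=
  M = ∑ i, Ms i ∧ (∀ i, IsRMatrix (Ms i)) ∧
  ∀ (i : ℕ) (h : i + 1 < l),
    (msupport (Ms ⟨i, Nat.lt_of_succ_lt h⟩) ∩ msupport (Ms ⟨i + 1, h⟩)).Nonempty

end

/-!
Conditional independence of a given order survives applying a function to each variable and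
passing to independent copies. If two uniform bits that differ with probability `2ε` are
conditionally independent of order `k`, then two uniform bits that differ with probability
`2ε(1 - ε)` are so of order `k + 1`: given either of the former, the latter are two independent
copies of it, each flipped with probability `ε`. Starting from independent bits, `ε` tends to `0`,
and so for every `r` there are conditionally independent uniform strings of `r` bits that differ
with arbitrarily small probability. Rounding the entries of `A` to multiples of `2⁻ʳ` produces a
function on such strings whose value at a uniform string has law close to `A`; the first component
of its value at one string and the second component at the other then have joint law close to `A`.
-/

open Filter Topology InformationTheory
open scoped Finset

section Pr

variable {Ω Ω' : Type} {A B : Type*} [Fintype Ω] [Fintype Ω'] {μ : Ω → ℝ} {μ' : Ω' → ℝ}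

lemma pr_congr {E F : Ω → Prop} (h : ∀ ω, E ω ↔ F ω) : pr μ E = pr μ F :=
  congrArg (pr μ) (funext fun ω => propext (h ω))

lemma pr_nonneg (hμ : 0 ≤ μ) (E : Ω → Prop) : 0 ≤ pr μ E :=
  Finset.sum_nonneg fun ω _ => by split_ifs <;> [exact hμ ω; rfl]

lemma pr_mono (hμ : 0 ≤ μ) {E F : Ω → Prop} (h : ∀ ω, E ω → F ω) : pr μ E ≤ pr μ F := by
  refine Finset.sum_le_sum fun ω _ => ?_
  by_cases hE : E ω
  · rw [if_pos hE, if_pos (h ω hE)]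
  · rw [if_neg hE]
    split_ifs <;> [exact hμ ω; rfl]

lemma pr_eq_zero_of_imp (hμ : 0 ≤ μ) {E F : Ω → Prop} (hF : pr μ F = 0) (h : ∀ ω, E ω → F ω) :
    pr μ E = 0 :=
  le_antisymm ((pr_mono hμ h).trans hF.le) (pr_nonneg hμ E)

lemma pr_pos (hμ : 0 ≤ μ) {E : Ω → Prop} {ω : Ω} (hω : 0 < μ ω) (hE : E ω) : 0 < pr μ E :=
  calc 0 < μ ω := hω
    _ = pr μ (· = ω) := by simp [pr]
    _ ≤ pr μ E := pr_mono hμ fun _ h => h ▸ hE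

lemma pr_true (μ : Ω → ℝ) : pr μ (fun _ => True) = ∑ ω, μ ω := by
  simp [pr]

lemma pr_add_pr_not (μ : Ω → ℝ) (E : Ω → Prop) : pr μ E + pr μ (¬ E ·) = ∑ ω, μ ω := by
  rw [pr, pr, ← Finset.sum_add_distrib]
  exact Finset.sum_congr rfl fun ω _ => by by_cases hE : E ω <;> simp [hE]

lemma abs_pr_sub_pr_le (hμ : 0 ≤ μ) {E F G : Ω → Prop} (h : ∀ ω, ¬ G ω → (E ω ↔ F ω)) :
    |pr μ E - pr μ F| ≤ pr μ G := by
  rw [pr, pr, ← Finset.sum_sub_distrib]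
  refine (Finset.abs_sum_le_sum_abs _ _).trans (Finset.sum_le_sum fun ω _ => ?_)
  have hω : 0 ≤ μ ω := hμ ω
  by_cases hG : G ω
  · by_cases hE : E ω <;> by_cases hF : F ω <;> simp [hE, hF, hG, abs_of_nonneg, hω]
  · simp [h ω hG, hG]

lemma sum_mul_comp_eq_sum_pr_mul (μ : Ω → ℝ) {X : Ω → A} {s : Finset A} (hs : ∀ ω, X ω ∈ s)
    (g : A → ℝ) : ∑ ω, μ ω * g (X ω) = ∑ x ∈ s, pr μ (X · = x) * g x := by
  simp only [pr, Finset.sum_mul]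
  rw [Finset.sum_comm]
  refine Finset.sum_congr rfl fun ω _ => ?_
  simp [ite_mul, hs ω]

lemma pr_comp_and_eq_sum (μ : Ω → ℝ) {X : Ω → A} {s : Finset A} (hs : ∀ ω, X ω ∈ s)
    (E : A → Prop) (H : Ω → Prop) :
    pr μ (fun ω => E (X ω) ∧ H ω) = ∑ x ∈ s with E x, pr μ (fun ω => X ω = x ∧ H ω) := by
  unfold pr
  rw [Finset.sum_comm]
  refine Finset.sum_congr rfl fun ω _ => ?_
  by_cases hH : H ω <;> simp [hH, hs ω]

lemma pr_eq_sum_pr_and (μ : Ω → ℝ) {X : Ω → A} {s : Finset A} (hs : ∀ ω, X ω ∈ s) (H : Ω → Prop) :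
    pr μ H = ∑ x ∈ s, pr μ (fun ω => X ω = x ∧ H ω) := by
  simpa using pr_comp_and_eq_sum μ hs (fun _ => True) H

lemma pr_comp_congr {X : Ω → A} {X' : Ω' → A} (h : ∀ x, pr μ (X · = x) = pr μ' (X' · = x))
    (E : A → Prop) : pr μ (fun ω => E (X ω)) = pr μ' (fun ω => E (X' ω)) := by
  let s := Finset.univ.image X ∪ Finset.univ.image X'
  have hX := pr_comp_and_eq_sum μ (X := X) (s := s) (by simp [s]) E fun _ => True
  have hX' := pr_comp_and_eq_sum μ' (X := X') (s := s) (by simp [s]) E fun _ => True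
  simp only [and_true] at hX hX'
  rw [hX, hX', Finset.sum_congr rfl fun x _ => h x]

lemma pr_comp_pair_congr {α : Ω → A} {β : Ω → B} {α' : Ω' → A} {β' : Ω' → B}
    (h : ∀ a b, pr μ (fun ω => α ω = a ∧ β ω = b) = pr μ' (fun ω => α' ω = a ∧ β' ω = b))
    (E : A → B → Prop) :
    pr μ (fun ω => E (α ω) (β ω)) = pr μ' (fun ω => E (α' ω) (β' ω)) :=
  pr_comp_congr (X := fun ω => (α ω, β ω)) (X' := fun ω => (α' ω, β' ω))
    (fun x => by simpa only [Prod.ext_iff] using h x.1 x.2) fun x => E x.1 x.2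

lemma pr_comp_and_mul_of_forall_eq {α : Ω → A} {β : Ω → B} {H : Ω → Prop} {t : ℝ}
    (h : ∀ a b, pr μ (fun ω => α ω = a ∧ β ω = b ∧ H ω) * t =
      pr μ (fun ω => α ω = a ∧ H ω) * pr μ (fun ω => β ω = b ∧ H ω))
    (E : A → Prop) (F : B → Prop) :
    pr μ (fun ω => E (α ω) ∧ F (β ω) ∧ H ω) * t =
      pr μ (fun ω => E (α ω) ∧ H ω) * pr μ (fun ω => F (β ω) ∧ H ω) := by
  let s := Finset.univ.image α
  let u := Finset.univ.image β
  have hs : ∀ ω, α ω ∈ s := by simp [s]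
  have hu : ∀ ω, β ω ∈ u := by simp [u]
  have expand : pr μ (fun ω => E (α ω) ∧ F (β ω) ∧ H ω) =
      ∑ a ∈ s with E a, ∑ b ∈ u with F b, pr μ (fun ω => α ω = a ∧ β ω = b ∧ H ω) := by
    rw [pr_comp_and_eq_sum μ hs]
    simp only [and_left_comm (a := α _ = _), pr_comp_and_eq_sum μ hu]
  rw [expand, pr_comp_and_eq_sum μ hs, pr_comp_and_eq_sum μ hu, Finset.sum_mul_sum]
  simp only [Finset.sum_mul, h]

end Pr

section Information

variable {Ω A B C : Type} [Fintype Ω] {μ : Ω → ℝ} {α : Ω → A} {β : Ω → B} {γ : Ω → C}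

lemma mul_klFun_div {p q : ℝ} (hpq : q = 0 → p = 0) :
    q * klFun (p / q) = p * Real.log (p / q) + q - p := by
  rcases eq_or_ne q 0 with rfl | hq
  · simp [hpq rfl]
  · rw [klFun_apply]
    field_simp

lemma sum_mul_log_div_eq_zero_iff {ι : Type*} {s : Finset ι} {p q : ι → ℝ}
    (hp : ∀ i ∈ s, 0 ≤ p i) (hq : ∀ i ∈ s, 0 ≤ q i) (hpq : ∀ i ∈ s, q i = 0 → p i = 0)
    (hsum : ∑ i ∈ s, p i = ∑ i ∈ s, q i) :
    ∑ i ∈ s, p i * Real.log (p i / q i) = 0 ↔ ∀ i ∈ s, p i = q i := by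
  have hkl : ∑ i ∈ s, p i * Real.log (p i / q i) = ∑ i ∈ s, q i * klFun (p i / q i) := by
    rw [Finset.sum_congr rfl fun i hi => mul_klFun_div (hpq i hi), Finset.sum_sub_distrib,
      Finset.sum_add_distrib, hsum, add_sub_cancel_right]
  have hterm : ∀ i ∈ s, 0 ≤ q i * klFun (p i / q i) := fun i hi =>
    mul_nonneg (hq i hi) (klFun_nonneg (div_nonneg (hp i hi) (hq i hi)))
  rw [hkl, Finset.sum_eq_zero_iff_of_nonneg hterm]
  refine forall₂_congr fun i hi => ?_
  rw [mul_eq_zero, klFun_eq_zero_iff (div_nonneg (hp i hi) (hq i hi))]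
  rcases eq_or_ne (q i) 0 with hq0 | hq0
  · simp [hq0, hpq i hi hq0]
  · simp [hq0, div_eq_one_iff_eq]

lemma ent_eq_neg_sum_mul_logb (μ : Ω → ℝ) (α : Ω → A) :
    ent μ α = -∑ ω, μ ω * Real.logb 2 (pr μ (α · = α ω)) := by
  rw [ent, sum_mul_comp_eq_sum_pr_mul μ (X := α) (s := Finset.univ.image α) (by simp)
    fun a => Real.logb 2 (pr μ (α · = a))]

/-- `α` and `β` are independent given `γ`, with denominators cleared so that values `c` of
probability zero impose no condition. -/
def CondIndepGiven (μ : Ω → ℝ) (α : Ω → A) (β : Ω → B) (γ : Ω → C) : Prop :=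
  ∀ a b c, pr μ (fun ω => α ω = a ∧ β ω = b ∧ γ ω = c) * pr μ (γ · = c) =
    pr μ (fun ω => α ω = a ∧ γ ω = c) * pr μ (fun ω => β ω = b ∧ γ ω = c)

/-- `Pr[α = a | γ = c] · Pr[β = b | γ = c] · Pr[γ = c]` at `x = ((a, b), c)`: the joint law of
the triple if `α` and `β` were made independent given `γ`. It is `0` where `Pr[γ = c] = 0`. -/
noncomputable def condProductLaw (μ : Ω → ℝ) (α : Ω → A) (β : Ω → B) (γ : Ω → C)
    (x : (A × B) × C) : ℝ :=
  pr μ (fun ω => α ω = x.1.1 ∧ γ ω = x.2) * pr μ (fun ω => β ω = x.1.2 ∧ γ ω = x.2) /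
    pr μ (γ · = x.2)

lemma condProductLaw_nonneg (hμ : 0 ≤ μ) (x : (A × B) × C) : 0 ≤ condProductLaw μ α β γ x :=
  div_nonneg (mul_nonneg (pr_nonneg hμ _) (pr_nonneg hμ _)) (pr_nonneg hμ _)

lemma pr_triple_eq_zero_of_condProductLaw_eq_zero (hμ : 0 ≤ μ) (x : (A × B) × C)
    (hx : condProductLaw μ α β γ x = 0) : pr μ (fun ω => ((α ω, β ω), γ ω) = x) = 0 := by
  rw [condProductLaw, div_eq_zero_iff, mul_eq_zero] at hx
  obtain (hαγ | hβγ) | hγ := hx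
  · exact pr_eq_zero_of_imp hμ hαγ (by rintro ω rfl; simp)
  · exact pr_eq_zero_of_imp hμ hβγ (by rintro ω rfl; simp)
  · exact pr_eq_zero_of_imp hμ hγ (by rintro ω rfl; simp)

lemma sum_condProductLaw {sA : Finset A} {sB : Finset B} (hA : ∀ ω, α ω ∈ sA)
    (hB : ∀ ω, β ω ∈ sB) (c : C) :
    ∑ y ∈ sA ×ˢ sB, condProductLaw μ α β γ (y, c) = pr μ (γ · = c) := by
  simp only [condProductLaw, ← Finset.sum_div, Finset.sum_product]
  rw [← Finset.sum_mul_sum, ← pr_eq_sum_pr_and μ hA, ← pr_eq_sum_pr_and μ hB, mul_self_div_self]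

lemma pr_triple_eq_condProductLaw_iff (hμ : 0 ≤ μ) (a : A) (b : B) (c : C) :
    pr μ (fun ω => ((α ω, β ω), γ ω) = ((a, b), c)) = condProductLaw μ α β γ ((a, b), c) ↔
      pr μ (fun ω => α ω = a ∧ β ω = b ∧ γ ω = c) * pr μ (γ · = c) =
        pr μ (fun ω => α ω = a ∧ γ ω = c) * pr μ (fun ω => β ω = b ∧ γ ω = c) := by
  simp only [condProductLaw, Prod.mk.injEq, and_assoc]
  rcases eq_or_ne (pr μ (γ · = c)) 0 with hc | hc
  · have htriple : pr μ (fun ω => α ω = a ∧ β ω = b ∧ γ ω = c) = 0 :=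
      pr_eq_zero_of_imp hμ hc fun _ h => h.2.2
    have hpair : pr μ (fun ω => α ω = a ∧ γ ω = c) = 0 := pr_eq_zero_of_imp hμ hc fun _ h => h.2
    simp [htriple, hpair]
  · rw [eq_div_iff hc]

lemma condMutualInfo_eq_sum_mul_logb_div (hμ : 0 ≤ μ) {s : Finset ((A × B) × C)}
    (hs : ∀ ω, ((α ω, β ω), γ ω) ∈ s) :
    condMutualInfo μ α β γ = ∑ x ∈ s, pr μ (fun ω => ((α ω, β ω), γ ω) = x) *
      Real.logb 2 (pr μ (fun ω => ((α ω, β ω), γ ω) = x) / condProductLaw μ α β γ x) := by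
  rw [← sum_mul_comp_eq_sum_pr_mul μ hs fun x =>
    Real.logb 2 (pr μ (fun ω => ((α ω, β ω), γ ω) = x) / condProductLaw μ α β γ x)]
  simp only [condMutualInfo, condEnt, ent_eq_neg_sum_mul_logb, ← Finset.sum_neg_distrib,
    ← Finset.sum_add_distrib, ← Finset.sum_sub_distrib]
  refine Finset.sum_congr rfl fun ω _ => ?_
  rcases (hμ ω).eq_or_lt with hω | hω
  · simp [← hω]
  have hne (E : Ω → Prop) (hE : E ω) : pr μ E ≠ 0 := (pr_pos hμ hω hE).ne'
  simp only [condProductLaw, Prod.mk.injEq]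
  rw [Real.logb_div, Real.logb_div, Real.logb_mul]
  · ring
  all_goals simp [hne]

lemma condMutualInfo_eq_zero_iff_of_mem (hμ : 0 ≤ μ) {sA : Finset A} {sB : Finset B}
    {sC : Finset C} (hA : ∀ ω, α ω ∈ sA) (hB : ∀ ω, β ω ∈ sB) (hC : ∀ ω, γ ω ∈ sC) :
    condMutualInfo μ α β γ = 0 ↔ ∀ x ∈ (sA ×ˢ sB) ×ˢ sC,
      pr μ (fun ω => ((α ω, β ω), γ ω) = x) = condProductLaw μ α β γ x := by
  have hAB : ∀ ω, (α ω, β ω) ∈ sA ×ˢ sB := fun ω => Finset.mk_mem_product (hA ω) (hB ω)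
  have hsum : ∑ x ∈ (sA ×ˢ sB) ×ˢ sC, pr μ (fun ω => ((α ω, β ω), γ ω) = x) =
      ∑ x ∈ (sA ×ˢ sB) ×ˢ sC, condProductLaw μ α β γ x := by
    simp only [Finset.sum_product_right _ sC, sum_condProductLaw hA hB, Prod.mk.injEq (α := A × B),
      ← pr_eq_sum_pr_and μ hAB]
  rw [condMutualInfo_eq_sum_mul_logb_div hμ fun ω => Finset.mk_mem_product (hAB ω) (hC ω)]
  simp only [← Real.log_div_log, ← mul_div_assoc, ← Finset.sum_div]
  rw [div_eq_zero_iff, or_iff_left (Real.log_pos one_lt_two).ne',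
    sum_mul_log_div_eq_zero_iff (fun _ _ => pr_nonneg hμ _) (fun x _ => condProductLaw_nonneg hμ x)
      (fun x _ => pr_triple_eq_zero_of_condProductLaw_eq_zero hμ x) hsum]

theorem condMutualInfo_eq_zero_iff (hμ : 0 ≤ μ) :
    condMutualInfo μ α β γ = 0 ↔ CondIndepGiven μ α β γ := by
  constructor
  · intro h a b c
    rw [← pr_triple_eq_condProductLaw_iff hμ]
    exact (condMutualInfo_eq_zero_iff_of_mem hμ (sA := insert a (Finset.univ.image α))
      (sB := insert b (Finset.univ.image β)) (sC := insert c (Finset.univ.image γ))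
      (by simp) (by simp) (by simp)).1 h ((a, b), c) (by simp)
  · intro h
    exact (condMutualInfo_eq_zero_iff_of_mem hμ (sA := Finset.univ.image α)
      (sB := Finset.univ.image β) (sC := Finset.univ.image γ) (by simp) (by simp) (by simp)).2
      fun x _ => (pr_triple_eq_condProductLaw_iff hμ _ _ _).2 (h _ _ _)

end Information

section CondIndepOrder

variable {Ω Ω' A B C A' B' : Type} [Fintype Ω] [Fintype Ω'] {μ : Ω → ℝ} {μ' : Ω' → ℝ}
  {α : Ω → A} {β : Ω → B} {γ : Ω → C}

lemma condIndepOrder_succ_iff {k : ℕ} :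
    CondIndepOrder μ α β (k + 1) ↔
      ∃ (Ω' A' B' : Type) (_ : Fintype Ω') (μ' : Ω' → ℝ)
        (α₀ : Ω' → A) (β₀ : Ω' → B) (αs : Ω' → A') (βs : Ω' → B'),
        IsProb μ' ∧
        (∀ a b, pr μ' (fun ω => α₀ ω = a ∧ β₀ ω = b) = pr μ (fun ω => α ω = a ∧ β ω = b)) ∧
        CondIndepGiven μ' α₀ β₀ αs ∧ CondIndepGiven μ' α₀ β₀ βs ∧
        CondIndepOrder μ' αs βs k := by
  constructor
  · rintro ⟨Ω', A', B', iΩ', μ', α₀, β₀, αs, βs, hμ', hlaw, hα, hβ, hk⟩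
    exact ⟨Ω', A', B', iΩ', μ', α₀, β₀, αs, βs, hμ', hlaw,
      (condMutualInfo_eq_zero_iff hμ'.1).1 hα, (condMutualInfo_eq_zero_iff hμ'.1).1 hβ, hk⟩
  · rintro ⟨Ω', A', B', iΩ', μ', α₀, β₀, αs, βs, hμ', hlaw, hα, hβ, hk⟩
    exact ⟨Ω', A', B', iΩ', μ', α₀, β₀, αs, βs, hμ', hlaw,
      (condMutualInfo_eq_zero_iff hμ'.1).2 hα, (condMutualInfo_eq_zero_iff hμ'.1).2 hβ, hk⟩

theorem CondIndepOrder.congr_law {k : ℕ} {α' : Ω' → A} {β' : Ω' → B}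
    (h : CondIndepOrder μ α β k)
    (hlaw : ∀ a b, pr μ (fun ω => α ω = a ∧ β ω = b) = pr μ' (fun ω => α' ω = a ∧ β' ω = b)) :
    CondIndepOrder μ' α' β' k := by
  cases k with
  | zero =>
    intro a b
    rw [← hlaw, ← pr_comp_pair_congr hlaw fun x _ => x = a,
      ← pr_comp_pair_congr hlaw fun _ y => y = b]
    exact h a b
  | succ k =>
    rw [condIndepOrder_succ_iff] at h ⊢
    simpa only [← hlaw] using h

lemma Indep.comp (h : Indep μ α β) (f : A → A') (g : B → B') :
    Indep μ (fun ω => f (α ω)) (fun ω => g (β ω)) := fun a b => by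
  simpa using pr_comp_and_mul_of_forall_eq (μ := μ) (H := fun _ => True) (t := 1)
    (fun a b => by simpa using h a b) (fun x => f x = a) (fun y => g y = b)

lemma CondIndepGiven.comp (h : CondIndepGiven μ α β γ) (f : A → A') (g : B → B') :
    CondIndepGiven μ (fun ω => f (α ω)) (fun ω => g (β ω)) γ := fun a b c =>
  pr_comp_and_mul_of_forall_eq (fun x y => h x y c) (fun x => f x = a) (fun y => g y = b)

theorem CondIndepOrder.comp {k : ℕ} (h : CondIndepOrder μ α β k) (f : A → A') (g : B → B') :
    CondIndepOrder μ (fun ω => f (α ω)) (fun ω => g (β ω)) k := by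
  cases k with
  | zero => exact Indep.comp h f g
  | succ k =>
    rw [condIndepOrder_succ_iff] at h ⊢
    obtain ⟨Ω', A₁, B₁, iΩ', μ', α₀, β₀, αs, βs, hμ', hlaw, hα, hβ, hk⟩ := h
    exact ⟨Ω', A₁, B₁, iΩ', μ', fun ω => f (α₀ ω), fun ω => g (β₀ ω), αs, βs, hμ',
      fun a b => pr_comp_pair_congr hlaw fun x y => f x = a ∧ g y = b,
      hα.comp f g, hβ.comp f g, hk⟩

lemma pr_iidMeasure_forall (μ : Ω → ℝ) {r : ℕ} (E : Fin r → Ω → Prop) :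
    pr (iidMeasure μ r) (fun ωv => ∀ i, E i (ωv i)) = ∏ i, pr μ (E i) := by
  simp only [pr, iidMeasure, Fintype.prod_sum]
  refine Finset.sum_congr rfl fun ωv _ => ?_
  rw [Finset.prod_ite_zero]
  simp

lemma sum_iidMeasure (μ : Ω → ℝ) (r : ℕ) : ∑ ωv, iidMeasure μ r ωv = (∑ ω, μ ω) ^ r := by
  simpa [pr_true] using pr_iidMeasure_forall μ fun (_ : Fin r) _ => True

lemma IsProb.iidMeasure (hμ : IsProb μ) (r : ℕ) : IsProb (iidMeasure μ r) :=
  ⟨fun _ => Finset.prod_nonneg fun _ _ => hμ.1 _, by rw [sum_iidMeasure, hμ.2, one_pow]⟩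

lemma pr_iidMeasure_iidRV_and (μ : Ω → ℝ) (α : Ω → A) (β : Ω → B) {r : ℕ} (a : Fin r → A)
    (b : Fin r → B) :
    pr (iidMeasure μ r) (fun ωv => iidRV α r ωv = a ∧ iidRV β r ωv = b) =
      ∏ i, pr μ (fun ω => α ω = a i ∧ β ω = b i) := by
  rw [← pr_iidMeasure_forall]
  exact pr_congr fun ωv => by simp only [iidRV, funext_iff, forall_and]

lemma pr_iidMeasure_iidRV (μ : Ω → ℝ) (α : Ω → A) {r : ℕ} (a : Fin r → A) :
    pr (iidMeasure μ r) (iidRV α r · = a) = ∏ i, pr μ (α · = a i) := by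
  rw [← pr_iidMeasure_forall]
  exact pr_congr fun ωv => by simp only [iidRV, funext_iff]

lemma Indep.iid (h : Indep μ α β) (r : ℕ) :
    Indep (iidMeasure μ r) (iidRV α r) (iidRV β r) := fun a b => by
  rw [pr_iidMeasure_iidRV_and, pr_iidMeasure_iidRV, pr_iidMeasure_iidRV,
    ← Finset.prod_mul_distrib]
  exact Finset.prod_congr rfl fun i _ => h (a i) (b i)

lemma CondIndepGiven.iid (h : CondIndepGiven μ α β γ) (r : ℕ) :
    CondIndepGiven (iidMeasure μ r) (iidRV α r) (iidRV β r) (iidRV γ r) := fun a b c => by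
  have htriple : pr (iidMeasure μ r) (fun ωv => iidRV α r ωv = a ∧ iidRV β r ωv = b ∧
      iidRV γ r ωv = c) = ∏ i, pr μ (fun ω => α ω = a i ∧ β ω = b i ∧ γ ω = c i) := by
    rw [← pr_iidMeasure_forall]
    exact pr_congr fun ωv => by simp only [iidRV, funext_iff, forall_and]
  rw [htriple, pr_iidMeasure_iidRV, pr_iidMeasure_iidRV_and, pr_iidMeasure_iidRV_and,
    ← Finset.prod_mul_distrib, ← Finset.prod_mul_distrib]
  exact Finset.prod_congr rfl fun i _ => h (a i) (b i) (c i)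

theorem CondIndepOrder.iid {k : ℕ} (h : CondIndepOrder μ α β k) (r : ℕ) :
    CondIndepOrder (iidMeasure μ r) (iidRV α r) (iidRV β r) k := by
  induction k generalizing Ω A B with
  | zero => exact Indep.iid h r
  | succ k ih =>
    rw [condIndepOrder_succ_iff] at h ⊢
    obtain ⟨Ω', A', B', iΩ', μ', α₀, β₀, αs, βs, hμ', hlaw, hα, hβ, hk⟩ := h
    refine ⟨Fin r → Ω', Fin r → A', Fin r → B', inferInstance, iidMeasure μ' r, iidRV α₀ r,
      iidRV β₀ r, iidRV αs r, iidRV βs r, hμ'.iidMeasure r, fun a b => ?_, hα.iid r, hβ.iid r,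
      ih hk⟩
    simp only [pr_iidMeasure_iidRV_and, hlaw]

end CondIndepOrder

section Bits

/-- The law on pairs of bits with joint probability matrix `Dmat ε`: two uniform bits that differ
with probability `2 * ε`. -/
noncomputable def bitLaw (ε : ℝ) (p : Fin 2 × Fin 2) : ℝ :=
  Dmat ε p.1 p.2

lemma sum_bitLaw (ε : ℝ) : ∑ p, bitLaw ε p = 1 := by
  norm_num [bitLaw, Dmat, Fintype.sum_prod_type]

lemma isProb_bitLaw {ε : ℝ} (h₀ : 0 ≤ ε) (h₁ : ε ≤ 1 / 2) : IsProb (bitLaw ε) := by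
  refine ⟨fun p => ?_, sum_bitLaw ε⟩
  rw [bitLaw, Dmat]
  split_ifs <;> linarith

lemma pr_bitLaw_fst (ε : ℝ) (i : Fin 2) : pr (bitLaw ε) (·.1 = i) = 1 / 2 := by
  fin_cases i <;> simp [pr, bitLaw, Dmat, Fintype.sum_prod_type]

lemma pr_bitLaw_fst_eq_snd (ε : ℝ) : pr (bitLaw ε) (fun p => p.1 = p.2) = 1 - 2 * ε := by
  norm_num [pr, bitLaw, Dmat, Fintype.sum_prod_type, ← two_mul, mul_sub]

lemma indep_bitLaw_quarter : Indep (bitLaw (1 / 4)) Prod.fst Prod.snd := by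
  have hD (i j : Fin 2) : Dmat (1 / 4) i j = 1 / 4 := by
    rw [Dmat]
    split_ifs <;> norm_num
  intro i j
  fin_cases i <;> fin_cases j <;> norm_num [pr, bitLaw, hD, Fintype.sum_prod_type]

/-- The law of bits `((u, v), (w, z))` with `(w, z)` distributed as `bitLaw ε`, such that given
either of `w` and `z` the bits `u` and `v` are two independent copies of it, each flipped with
probability `ε`. -/
noncomputable def noisyCopiesLaw (ε : ℝ) (p : (Fin 2 × Fin 2) × (Fin 2 × Fin 2)) : ℝ :=
  if p.2.1 = p.2.2 then if p.1.1 = p.2.1 ∧ p.1.2 = p.2.1 then 1 / 2 - ε else 0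
  else if p.1.1 = p.1.2 then ε * ε / 2 else ε * (1 - ε) / 2

lemma pr_noisyCopiesLaw_snd (ε : ℝ) (i j : Fin 2) :
    pr (noisyCopiesLaw ε) (fun p => p.2.1 = i ∧ p.2.2 = j) =
      pr (bitLaw ε) (fun p => p.1 = i ∧ p.2 = j) := by
  fin_cases i <;> fin_cases j <;>
    simp [pr, noisyCopiesLaw, bitLaw, Dmat, Fintype.sum_prod_type] <;> ring

lemma pr_noisyCopiesLaw_fst (ε : ℝ) (i j : Fin 2) :
    pr (noisyCopiesLaw ε) (fun p => p.1.1 = i ∧ p.1.2 = j) =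
      pr (bitLaw (ε * (1 - ε))) (fun p => p.1 = i ∧ p.2 = j) := by
  fin_cases i <;> fin_cases j <;>
    simp [pr, noisyCopiesLaw, bitLaw, Dmat, Fintype.sum_prod_type] <;> ring

lemma condIndepGiven_noisyCopiesLaw_left (ε : ℝ) :
    CondIndepGiven (noisyCopiesLaw ε) (·.1.1) (·.1.2) (·.2.1) := by
  intro i j l
  fin_cases i <;> fin_cases j <;> fin_cases l <;>
    simp [pr, noisyCopiesLaw, Fintype.sum_prod_type] <;> ring

lemma condIndepGiven_noisyCopiesLaw_right (ε : ℝ) :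
    CondIndepGiven (noisyCopiesLaw ε) (·.1.1) (·.1.2) (·.2.2) := by
  intro i j l
  fin_cases i <;> fin_cases j <;> fin_cases l <;>
    simp [pr, noisyCopiesLaw, Fintype.sum_prod_type] <;> ring

lemma isProb_noisyCopiesLaw {ε : ℝ} (h₀ : 0 ≤ ε) (h₁ : ε ≤ 1 / 2) :
    IsProb (noisyCopiesLaw ε) := by
  constructor
  · intro p
    have : 0 ≤ 1 - ε := by linarith
    rw [noisyCopiesLaw]
    split_ifs <;> positivity
  · have hlaw := pr_comp_pair_congr (pr_noisyCopiesLaw_snd ε) fun _ _ => True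
    rw [← pr_true, hlaw, pr_true, sum_bitLaw]

theorem condIndepOrder_bitLaw_succ {ε : ℝ} (h₀ : 0 ≤ ε) (h₁ : ε ≤ 1 / 2) {k : ℕ}
    (h : CondIndepOrder (bitLaw ε) Prod.fst Prod.snd k) :
    CondIndepOrder (bitLaw (ε * (1 - ε))) Prod.fst Prod.snd (k + 1) :=
  condIndepOrder_succ_iff.2 ⟨_, Fin 2, Fin 2, inferInstance, noisyCopiesLaw ε, (·.1.1), (·.1.2),
    (·.2.1), (·.2.2), isProb_noisyCopiesLaw h₀ h₁, pr_noisyCopiesLaw_fst ε,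
    condIndepGiven_noisyCopiesLaw_left ε, condIndepGiven_noisyCopiesLaw_right ε,
    h.congr_law fun i j => (pr_noisyCopiesLaw_snd ε i j).symm⟩

/-- The noise level `ε` for which `bitLaw ε` is shown to be conditionally independent of order
`k`, starting from two independent uniform bits. -/
noncomputable def noiseLevel : ℕ → ℝ
  | 0 => 1 / 4
  | k + 1 => noiseLevel k * (1 - noiseLevel k)

lemma noiseLevel_mem_Icc (k : ℕ) : noiseLevel k ∈ Set.Icc 0 (1 / 2) := by
  induction k with
  | zero => norm_num [noiseLevel]
  | succ k ih =>
    rw [noiseLevel]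
    exact ⟨mul_nonneg ih.1 (by linarith [ih.2]), by nlinarith [ih.1, ih.2]⟩

lemma antitone_noiseLevel : Antitone noiseLevel :=
  antitone_nat_of_succ_le fun k => by
    rw [noiseLevel]
    nlinarith [sq_nonneg (noiseLevel k)]

lemma tendsto_noiseLevel : Tendsto noiseLevel atTop (𝓝 0) := by
  obtain ⟨L, hL⟩ : ∃ L, Tendsto noiseLevel atTop (𝓝 L) :=
    ⟨_, tendsto_atTop_ciInf antitone_noiseLevel
      ⟨0, Set.forall_mem_range.2 fun k => (noiseLevel_mem_Icc k).1⟩⟩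
  have hstep : Tendsto (fun k => noiseLevel (k + 1)) atTop (𝓝 (L * (1 - L))) :=
    hL.mul (hL.const_sub 1)
  have hfix : L = L * (1 - L) := tendsto_nhds_unique ((tendsto_add_atTop_iff_nat 1).2 hL) hstep
  have hzero : L = 0 := pow_eq_zero_iff two_ne_zero |>.1 (by linarith : L ^ 2 = 0)
  rwa [hzero] at hL

lemma isProb_bitLaw_noiseLevel (k : ℕ) : IsProb (bitLaw (noiseLevel k)) :=
  isProb_bitLaw (noiseLevel_mem_Icc k).1 (noiseLevel_mem_Icc k).2

theorem condIndepOrder_bitLaw_noiseLevel (k : ℕ) :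
    CondIndepOrder (bitLaw (noiseLevel k)) Prod.fst Prod.snd k := by
  induction k with
  | zero => exact indep_bitLaw_quarter
  | succ k ih =>
    exact condIndepOrder_bitLaw_succ (noiseLevel_mem_Icc k).1 (noiseLevel_mem_Icc k).2 ih

end Bits

section Rounding

variable {P S : Type*} [Fintype P]

lemma abs_sub_le_card_mul_of_sum_eq {x y : P → ℝ} {d : ℝ} (hsum : ∑ p, x p = ∑ p, y p)
    (h : ∀ p, x p - d ≤ y p) (p : P) :
    |x p - y p| ≤ Fintype.card P * d := by
  have hcard : (1 : ℝ) ≤ Fintype.card P := by exact_mod_cast Fintype.card_pos_iff.2 ⟨p⟩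
  -- The totals agree, so an excess at `p` is paid for by deficits of at most `d` elsewhere.
  have hexcess : y p - x p + d ≤ Fintype.card P * d :=
    calc y p - x p + d ≤ ∑ q, (y q - x q + d) :=
          Finset.single_le_sum (f := fun q => y q - x q + d) (fun q _ => by linarith [h q])
            (Finset.mem_univ p)
      _ = Fintype.card P * d := by simp [Finset.sum_add_distrib, hsum]
  have hd : 0 ≤ d := nonneg_of_mul_nonneg_right
    (by linarith [h p] : 0 ≤ (Fintype.card P : ℝ) * d) (by linarith)
  rw [abs_le]
  constructor <;> nlinarith [h p]

lemma exists_le_card_fiber [Nonempty P] [Fintype S] {c : P → ℕ}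
    (hc : ∑ p, c p ≤ Fintype.card S) :
    ∃ f : S → P, ∀ p, c p ≤ #{s | f s = p} := by
  obtain ⟨φ⟩ : Nonempty ((Σ p, Fin (c p)) ↪ S) :=
    Function.Embedding.nonempty_of_card_le (by simpa using hc)
  refine ⟨Function.extend φ Sigma.fst fun _ => Classical.arbitrary P, fun p => ?_⟩
  calc c p = #(Finset.univ.map ((Function.Embedding.sigmaMk p).trans φ)) := by simp
    _ ≤ _ := Finset.card_le_card fun s hs => by
      obtain ⟨i, -, rfl⟩ := Finset.mem_map.1 hs
      simp [φ.injective.extend_apply]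

lemma exists_abs_card_fiber_sub_le [Fintype S] {a : P → ℝ} (ha : 0 ≤ a) (hsum : ∑ p, a p = 1) :
    ∃ f : S → P, ∀ p, |Fintype.card S * a p - #{s | f s = p}| ≤ Fintype.card P := by
  have : Nonempty P := by
    by_contra hP
    simp [not_nonempty_iff.1 hP] at hsum
  have hfloor : ∑ p, ⌊Fintype.card S * a p⌋₊ ≤ Fintype.card S := by
    rw [← Nat.cast_le (α := ℝ), Nat.cast_sum]
    calc ∑ p, (⌊Fintype.card S * a p⌋₊ : ℝ) ≤ ∑ p, Fintype.card S * a p :=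
          Finset.sum_le_sum fun p _ => Nat.floor_le (mul_nonneg (Nat.cast_nonneg _) (ha p))
      _ = Fintype.card S := by rw [← Finset.mul_sum, hsum, mul_one]
  obtain ⟨f, hf⟩ := exists_le_card_fiber hfloor
  refine ⟨f, fun p => ?_⟩
  have htotal : ∑ p, Fintype.card S * a p = ∑ p, (#{s | f s = p} : ℝ) := by
    rw [← Finset.mul_sum, hsum, mul_one, ← Finset.card_univ,
      Finset.card_eq_sum_card_fiberwise (f := f) (t := Finset.univ) (by simp), Nat.cast_sum]
  have hlower (p : P) : Fintype.card S * a p - 1 ≤ #{s | f s = p} :=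
    (Nat.sub_one_lt_floor _).le.trans (Nat.cast_le.2 (hf p))
  simpa using abs_sub_le_card_mul_of_sum_eq htotal hlower p

end Rounding

section Density

lemma IsJointMatrixOf.isJointProbMatrix {Ω : Type} [Fintype Ω] {μ : Ω → ℝ} {m n : ℕ}
    {M : Matrix (Fin m) (Fin n) ℝ} {α : Ω → Fin m} {β : Ω → Fin n}
    (hM : IsJointMatrixOf M μ α β) (hμ : IsProb μ) : IsJointProbMatrix M := by
  refine ⟨fun i j => hM i j ▸ pr_nonneg hμ.1 _, ?_⟩
  calc ∑ i, ∑ j, M i j = ∑ i, ∑ j, pr μ (fun ω => β ω = j ∧ α ω = i) := by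
        simp only [hM _ _, and_comm]
    _ = ∑ i, pr μ (α · = i) :=
      Finset.sum_congr rfl fun i _ => (pr_eq_sum_pr_and μ (by simp) _).symm
    _ = pr μ fun _ => True := by
      rw [pr_eq_sum_pr_and μ (X := α) (s := Finset.univ) (by simp)]
      simp
    _ = 1 := (pr_true μ).trans hμ.2

lemma pr_iid_bitLaw_comp_fst {P : Type*} (ε : ℝ) {r : ℕ} (f : (Fin r → Fin 2) → P) (p : P) :
    pr (iidMeasure (bitLaw ε) r) (fun ω => f (iidRV Prod.fst r ω) = p) =
      #{u | f u = p} / 2 ^ r := by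
  have hsum := pr_comp_and_eq_sum (iidMeasure (bitLaw ε) r) (X := iidRV Prod.fst r)
    (s := Finset.univ) (by simp) (f · = p) fun _ => True
  simp only [and_true] at hsum
  simp [hsum, pr_iidMeasure_iidRV, pr_bitLaw_fst, div_eq_mul_inv]

lemma pr_iid_bitLaw_ne (ε : ℝ) (r : ℕ) :
    pr (iidMeasure (bitLaw ε) r) (fun ω => iidRV Prod.fst r ω ≠ iidRV Prod.snd r ω) =
      1 - (1 - 2 * ε) ^ r := by
  have heq : pr (iidMeasure (bitLaw ε) r) (fun ω => iidRV Prod.fst r ω = iidRV Prod.snd r ω) =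
      (1 - 2 * ε) ^ r := by
    simp only [iidRV, funext_iff]
    rw [pr_iidMeasure_forall (bitLaw ε) fun _ p => p.1 = p.2]
    simp [pr_bitLaw_fst_eq_snd]
  rw [← heq, eq_sub_iff_add_eq']
  exact (pr_add_pr_not _ _).trans (by rw [sum_iidMeasure, sum_bitLaw, one_pow])

lemma exists_noiseLevel_pr_iid_bitLaw_ne_lt (r : ℕ) {δ : ℝ} (hδ : 0 < δ) :
    ∃ k, pr (iidMeasure (bitLaw (noiseLevel k)) r)
      (fun ω => iidRV Prod.fst r ω ≠ iidRV Prod.snd r ω) < δ := by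
  have hlim : Tendsto (fun k => 1 - (1 - 2 * noiseLevel k) ^ r) atTop (𝓝 0) := by
    simpa using (((tendsto_noiseLevel.const_mul 2).const_sub 1).pow r).const_sub 1
  obtain ⟨k, hk⟩ := (hlim.eventually_lt_const hδ).exists
  exact ⟨k, (pr_iid_bitLaw_ne _ r).trans_lt hk⟩

lemma exists_bits_map_approx {P : Type*} [Fintype P] {a : P → ℝ} (ha : 0 ≤ a)
    (hsum : ∑ p, a p = 1) {δ : ℝ} (hδ : 0 < δ) :
    ∃ (r : ℕ) (f : (Fin r → Fin 2) → P), ∀ p, |a p - #{u | f u = p} / 2 ^ r| < δ := by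
  obtain ⟨r, hr⟩ := pow_unbounded_of_one_lt (Fintype.card P / δ) one_lt_two
  obtain ⟨f, hf⟩ := exists_abs_card_fiber_sub_le (S := Fin r → Fin 2) ha hsum
  refine ⟨r, f, fun p => ?_⟩
  have hcard : |2 ^ r * a p - #{u | f u = p}| ≤ Fintype.card P := by simpa using hf p
  calc |a p - #{u | f u = p} / 2 ^ r| = |(2 ^ r * a p - #{u | f u = p}) / 2 ^ r| := by
        congr 1
        field_simp
    _ = |2 ^ r * a p - #{u | f u = p}| / 2 ^ r := by
        rw [abs_div, abs_of_pos (a := (2 : ℝ) ^ r) (by positivity)]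
    _ ≤ Fintype.card P / 2 ^ r := by gcongr
    _ < δ := by rwa [div_lt_comm₀ (by positivity) hδ]

theorem isGoodMatrix_comp_iid_bitLaw {m n r : ℕ} (k : ℕ) (f : (Fin r → Fin 2) → Fin m)
    (g : (Fin r → Fin 2) → Fin n) : IsGoodMatrix (Matrix.of fun i j =>
      pr (iidMeasure (bitLaw (noiseLevel k)) r)
        fun ω => f (iidRV Prod.fst r ω) = i ∧ g (iidRV Prod.snd r ω) = j) :=
  ⟨_, inferInstance, _, _, _, k, (isProb_bitLaw_noiseLevel k).iidMeasure r,
    fun _ _ => rfl, ((condIndepOrder_bitLaw_noiseLevel k).iid r).comp f g⟩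

lemma IsGoodMatrix.isJointProbMatrix {m n : ℕ} {M : Matrix (Fin m) (Fin n) ℝ}
    (hM : IsGoodMatrix M) : IsJointProbMatrix M := by
  obtain ⟨_, _, _, _, _, _, hμ, hMμ, -⟩ := hM
  exact hMμ.isJointProbMatrix hμ

end Density

/-- The set of good matrices is dense in the set of all joint
probability matrices. -/
theorem isGoodMatrix_dense {m n : ℕ} (A : Matrix (Fin m) (Fin n) ℝ)
    (hA : IsJointProbMatrix A) (δ : ℝ) (hδ : 0 < δ) :
    ∃ B : Matrix (Fin m) (Fin n) ℝ, IsJointProbMatrix B ∧ IsGoodMatrix B ∧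
      ∀ i j, |A i j - B i j| < δ := by
  obtain ⟨r, f, hf⟩ := exists_bits_map_approx (a := fun p : Fin m × Fin n => A p.1 p.2)
    (fun p => hA.1 p.1 p.2) (by rw [Fintype.sum_prod_type, hA.2]) (half_pos hδ)
  obtain ⟨k, hk⟩ := exists_noiseLevel_pr_iid_bitLaw_ne_lt r (half_pos hδ)
  have hgood := isGoodMatrix_comp_iid_bitLaw k (fun u => (f u).1) (fun u => (f u).2)
  refine ⟨_, hgood.isJointProbMatrix, hgood, fun i j => ?_⟩
  let μ := iidMeasure (bitLaw (noiseLevel k)) r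
  let U : (Fin r → Fin 2 × Fin 2) → Fin r → Fin 2 := iidRV Prod.fst r
  let V : (Fin r → Fin 2 × Fin 2) → Fin r → Fin 2 := iidRV Prod.snd r
  have hμ : IsProb μ := (isProb_bitLaw_noiseLevel k).iidMeasure r
  have hA_U : |A i j - pr μ (fun ω => f (U ω) = (i, j))| < δ / 2 := by
    simpa only [μ, U, pr_iid_bitLaw_comp_fst] using hf (i, j)
  have hU_UV : |pr μ (fun ω => f (U ω) = (i, j)) -
      pr μ (fun ω => (f (U ω)).1 = i ∧ (f (V ω)).2 = j)| < δ / 2 := by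
    refine (abs_pr_sub_pr_le hμ.1 fun ω hω => ?_).trans_lt hk
    have hUV : U ω = V ω := not_not.1 hω
    rw [← hUV, Prod.ext_iff]
  exact (abs_sub_le _ _ _).trans_lt ((add_lt_add hA_U hU_UV).trans_eq (add_halves δ))
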